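/- Let Ω_D ⊂ ℝ² be an open bounded domain, and let w₋, w₊ ∈ C⁰(cl(Ω_D)) ∩ C²(Ω_D) satisfy w₋ > 1 and w₊ > 1 in Ω_D, 𝒩₁ w₋ ≥ 0 and 𝒩₁ w₊ ≤ 0 in Ω_D, and w₋ ≤ w₊ on ∂Ω_D. Assume that 𝒩₁ is locally uniformly elliptic with respect to w₊ or with respect to w₋ on Ω_D. Then w₋ ≤ w₊ everywhere in Ω_D. -/

import Mathlib

open Real Set

/-- Partial derivative in the first conical coordinate. -/
noncomputable def pd1 (f : ℝ × ℝ → ℝ) (x : ℝ × ℝ) : ℝ := fderiv ℝ f x (1, 0)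

/-- Partial derivative in the second conical coordinate. -/
noncomputable def pd2 (f : ℝ × ℝ → ℝ) (x : ℝ × ℝ) : ℝ := fderiv ℝ f x (0, 1)

/-- `D²f[a,b] = Σ_{i,j} a_i b_j ∂_{ij} f` evaluated at `x`. -/
noncomputable def D2 (f : ℝ × ℝ → ℝ) (a b x : ℝ × ℝ) : ℝ :=
    a.1 * b.1 * pd1 (pd1 f) x + a.1 * b.2 * pd1 (pd2 f) x
  + a.2 * b.1 * pd2 (pd1 f) x + a.2 * b.2 * pd2 (pd2 f) x

/-- The gradient `Df` as a vector of `ℝ × ℝ`. -/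
noncomputable def gradv (f : ℝ × ℝ → ℝ) (x : ℝ × ℝ) : ℝ × ℝ := (pd1 f x, pd2 f x)

/-- `Df · ξ` at `x = ξ`. -/
noncomputable def dotxi (f : ℝ × ℝ → ℝ) (x : ℝ × ℝ) : ℝ := pd1 f x * x.1 + pd2 f x * x.2

/-- `χ = ψ − Dψ·ξ`. -/
noncomputable def chiF (ψ : ℝ × ℝ → ℝ) (x : ℝ × ℝ) : ℝ := ψ x - dotxi ψ x

/-- The squared scaled sound speed `a² = |Dψ|² + χ² − 1`. -/
noncomputable def sqSound (ψ : ℝ × ℝ → ℝ) (x : ℝ × ℝ) : ℝ :=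
  (pd1 ψ x) ^ 2 + (pd2 ψ x) ^ 2 + (chiF ψ x) ^ 2 - 1

/-- `ℱ(μ,ψ) = a²(Δψ + D²ψ[ξ,ξ]) − μ D²ψ[Dψ − χξ, Dψ − χξ]`;
`μ = 1` is the conical Chaplygin potential equation. -/
noncomputable def Fop (μ : ℝ) (ψ : ℝ × ℝ → ℝ) (x : ℝ × ℝ) : ℝ :=
  sqSound ψ x * (pd1 (pd1 ψ) x + pd2 (pd2 ψ) x + D2 ψ x x x)
    - μ * D2 ψ (gradv ψ x - chiF ψ x • x) (gradv ψ x - chiF ψ x • x) x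

/-- `b²(w) = w² − 1 + (1+|ξ|²)(|Dw|² + (Dw·ξ)²)`. -/
noncomputable def b2 (w : ℝ × ℝ → ℝ) (x : ℝ × ℝ) : ℝ :=
  (w x) ^ 2 - 1
    + (1 + x.1 ^ 2 + x.2 ^ 2) * ((pd1 w x) ^ 2 + (pd2 w x) ^ 2 + (dotxi w x) ^ 2)

/-- The operator `𝒩_μ`. -/
noncomputable def Nop (μ : ℝ) (w : ℝ × ℝ → ℝ) (x : ℝ × ℝ) : ℝ :=
  b2 w x * (pd1 (pd1 w) x + pd2 (pd2 w) x + D2 w x x x)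
    - μ * (1 + x.1 ^ 2 + x.2 ^ 2) *
        D2 w (gradv w x + dotxi w x • x) (gradv w x + dotxi w x • x) x
    + 2 * ((1 - μ) * b2 w x + μ * ((w x) ^ 2 - 1)) * dotxi w x
    + ((2 - μ) * b2 w x + μ * ((w x) ^ 2 - 1)) * w x / (1 + x.1 ^ 2 + x.2 ^ 2)

/-- Local uniform ellipticity of `𝒩_μ` with respect to `w` on `Ω`: on each compact
subset the principal-part matrix `b²(w)(I₂+ξξᵀ) − μ(1+|ξ|²)qqᵀ`, `q = Dw + (Dw·ξ)ξ`,
has eigenvalues bounded below by a positive constant. -/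
def LocUnifElliptic (μ : ℝ) (w : ℝ × ℝ → ℝ) (Ω : Set (ℝ × ℝ)) : Prop :=
  ∀ K : Set (ℝ × ℝ), K ⊆ Ω → IsCompact K → ∃ lam : ℝ, 0 < lam ∧
    ∀ x ∈ K, ∀ v : ℝ × ℝ,
      lam * (v.1 ^ 2 + v.2 ^ 2) ≤
        b2 w x * (v.1 ^ 2 + v.2 ^ 2 + (x.1 * v.1 + x.2 * v.2) ^ 2)
          - μ * (1 + x.1 ^ 2 + x.2 ^ 2) *
              ((pd1 w x + dotxi w x * x.1) * v.1 + (pd2 w x + dotxi w x * x.2) * v.2) ^ 2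

/-!
Substitute `w = cosh U`. Dividing `𝒩_μ w` by `sinh³ U` leaves an operator in `U` whose principal
part is, for `μ ≤ 1`, elliptic for every `U`, and in which the value of `U` enters only through
`coth U`, multiplied by a positive function of `(ξ, DU)`. Let `w₋ = cosh U₋` and `w₊ = cosh U₊`. At
a positive interior maximum of `U₋ - U₊` the gradients agree and the second order terms are ordered,
so the strict monotonicity of `coth` contradicts the two differential inequalities.
-/

open Filter Topology

section SecondDerivative

variable {𝕜 E F : Type*} [NontriviallyNormedField 𝕜] [NormedAddCommGroup E] [NormedSpace 𝕜 E]
  [NormedAddCommGroup F] [NormedSpace 𝕜 F]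

lemma differentiableAt_fderiv_of_contDiffAt_two {f : E → F} {x : E} (hf : ContDiffAt 𝕜 2 f x) :
    DifferentiableAt 𝕜 (fderiv 𝕜 f) x :=
  (hf.fderiv_right (m := 1) (by norm_num)).differentiableAt one_ne_zero

lemma hasFDerivAt_fderiv_apply {f : E → F} {x : E} (hf : ContDiffAt 𝕜 2 f x) (v : E) :
    HasFDerivAt (fun y => fderiv 𝕜 f y v) ((fderiv 𝕜 (fderiv 𝕜 f) x).flip v) x := by
  simpa using (differentiableAt_fderiv_of_contDiffAt_two hf).hasFDerivAt.clm_apply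
    (hasFDerivAt_const v x)

lemma eventually_differentiableAt_of_contDiffAt_two {f : E → F} {x : E}
    (hf : ContDiffAt 𝕜 2 f x) : ∀ᶠ y in 𝓝 x, DifferentiableAt 𝕜 f y :=
  (hf.eventually (by simp)).mono fun _ hy => hy.differentiableAt two_ne_zero

lemma fderiv_fderiv_sub {f g : E → F} {x : E} (hf : ContDiffAt 𝕜 2 f x)
    (hg : ContDiffAt 𝕜 2 g x) :
    fderiv 𝕜 (fderiv 𝕜 (f - g)) x = fderiv 𝕜 (fderiv 𝕜 f) x - fderiv 𝕜 (fderiv 𝕜 g) x := by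
  have hfirst : fderiv 𝕜 (f - g) =ᶠ[𝓝 x] fderiv 𝕜 f - fderiv 𝕜 g := by
    filter_upwards [eventually_differentiableAt_of_contDiffAt_two hf,
      eventually_differentiableAt_of_contDiffAt_two hg] with y hfy hgy
    exact fderiv_sub hfy hgy
  rw [hfirst.fderiv_eq, fderiv_sub (differentiableAt_fderiv_of_contDiffAt_two hf)
    (differentiableAt_fderiv_of_contDiffAt_two hg)]

lemma fderiv_fderiv_comp_apply {φ : 𝕜 → F} {f : E → 𝕜} {x : E} (hφ : ContDiffAt 𝕜 2 φ (f x))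
    (hf : ContDiffAt 𝕜 2 f x) (a b : E) :
    fderiv 𝕜 (fderiv 𝕜 (φ ∘ f)) x a b =
      (fderiv 𝕜 f x a * fderiv 𝕜 f x b) • deriv (deriv φ) (f x)
        + fderiv 𝕜 (fderiv 𝕜 f) x a b • deriv φ (f x) := by
  have hfirst : (fun y => fderiv 𝕜 (φ ∘ f) y b) =ᶠ[𝓝 x]
      fun y => fderiv 𝕜 f y b • deriv φ (f y) := by
    filter_upwards [eventually_differentiableAt_of_contDiffAt_two hf,
      hf.continuousAt.eventually (eventually_differentiableAt_of_contDiffAt_two hφ)] with y hfy hφy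
    rw [fderiv_comp y hφy hfy]
    exact fderiv_eq_smul_deriv _
  have hderiv : DifferentiableAt 𝕜 (deriv φ) (f x) :=
    (differentiableAt_fderiv_of_contDiffAt_two hφ).clm_apply (differentiableAt_const 1)
  have hsecond := (hasFDerivAt_fderiv_apply hf b).smul
    (hderiv.hasFDerivAt.comp x (hf.differentiableAt two_ne_zero).hasFDerivAt)
  have h := congr($((hasFDerivAt_fderiv_apply (hφ.comp x hf) b).unique
    (hsecond.congr_of_eventuallyEq hfirst)) a)
  simpa [fderiv_eq_smul_deriv, smul_smul, mul_comm] using h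

lemma deriv_deriv_comp_line {f : E → F} {x : E} (hf : ContDiffAt 𝕜 2 f x) (v : E) :
    deriv (deriv fun t : 𝕜 => f (x + t • v)) 0 = fderiv 𝕜 (fderiv 𝕜 f) x v v := by
  have hline (t : 𝕜) : HasDerivAt (fun t : 𝕜 => x + t • v) v t := by
    simpa using ((hasDerivAt_id t).smul_const v).const_add x
  have hzero : x + (0 : 𝕜) • v = x := by simp
  have htendsto : Tendsto (fun t : 𝕜 => x + t • v) (𝓝 0) (𝓝 x) := by
    simpa only [hzero] using (hline 0).continuousAt.tendsto
  have hfirst : deriv (fun t : 𝕜 => f (x + t • v)) =ᶠ[𝓝 0] fun t => fderiv 𝕜 f (x + t • v) v := by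
    filter_upwards [htendsto.eventually (eventually_differentiableAt_of_contDiffAt_two hf)]
      with t ht
    exact (HasFDerivAt.comp_hasDerivAt t ht.hasFDerivAt (hline t)).deriv
  have hsecond : HasFDerivAt (fun y => fderiv 𝕜 f y v) ((fderiv 𝕜 (fderiv 𝕜 f) x).flip v)
      (x + (0 : 𝕜) • v) := by
    simpa only [hzero] using hasFDerivAt_fderiv_apply hf v
  rw [hfirst.deriv_eq]
  exact (HasFDerivAt.comp_hasDerivAt (0 : 𝕜) hsecond (hline 0)).deriv

end SecondDerivative

section LocalMax

lemma deriv_deriv_nonpos_of_isLocalMax {f : ℝ → ℝ} {a : ℝ} (hf : ContinuousAt f a)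
    (hmax : IsLocalMax f a) : deriv (deriv f) a ≤ 0 := by
  by_contra! hpos
  have hmin : IsLocalMin f a := isLocalMin_of_deriv_deriv_pos hpos hmax.deriv_eq_zero hf
  have hconst : f =ᶠ[𝓝 a] fun _ => f a := by
    filter_upwards [hmax, hmin] with t hle hge using le_antisymm hle hge
  simp [hconst.deriv.deriv_eq] at hpos

variable {E : Type*} [NormedAddCommGroup E] [NormedSpace ℝ E] {f g : E → ℝ} {x : E}

lemma fderiv_fderiv_apply_self_nonpos_of_isLocalMax (hf : ContDiffAt ℝ 2 f x)
    (hmax : IsLocalMax f x) (v : E) : fderiv ℝ (fderiv ℝ f) x v v ≤ 0 := by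
  have hzero : x + (0 : ℝ) • v = x := by simp
  have hline : ContinuousAt (fun t : ℝ => x + t • v) 0 := by fun_prop
  rw [← deriv_deriv_comp_line hf v]
  refine deriv_deriv_nonpos_of_isLocalMax
    (ContinuousAt.comp (f := fun t : ℝ => x + t • v) (by rw [hzero]; exact hf.continuousAt)
      hline) ?_
  exact IsLocalMax.comp_continuous (g := fun t : ℝ => x + t • v) (by rwa [hzero]) hline

lemma fderiv_eq_of_isLocalMax_sub (hf : DifferentiableAt ℝ f x) (hg : DifferentiableAt ℝ g x)
    (hmax : IsLocalMax (f - g) x) : fderiv ℝ f x = fderiv ℝ g x :=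
  sub_eq_zero.1 ((fderiv_sub hf hg).symm.trans hmax.fderiv_eq_zero)

lemma fderiv_fderiv_apply_self_le_of_isLocalMax_sub (hf : ContDiffAt ℝ 2 f x)
    (hg : ContDiffAt ℝ 2 g x) (hmax : IsLocalMax (f - g) x) (v : E) :
    fderiv ℝ (fderiv ℝ f) x v v ≤ fderiv ℝ (fderiv ℝ g) x v v := by
  have h := fderiv_fderiv_apply_self_nonpos_of_isLocalMax (hf.sub hg) hmax v
  rw [← Pi.sub_def, fderiv_fderiv_sub hf hg] at h
  exact sub_nonpos.1 h

end LocalMax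

lemma exists_isLocalMax_gt_of_frontier_le {X α : Type*} [TopologicalSpace X] [LinearOrder α]
    [TopologicalSpace α] [ClosedIciTopology α] {Ω : Set X} {f : X → α} {c : α} {x : X}
    (hΩo : IsOpen Ω) (hΩc : IsCompact (closure Ω)) (hf : ContinuousOn f (closure Ω))
    (hfr : ∀ z ∈ frontier Ω, f z ≤ c) (hx : x ∈ Ω) (hcx : c < f x) :
    ∃ y ∈ Ω, IsLocalMax f y ∧ c < f y := by
  have hlt : ∀ z ∈ closure Ω \ Ω, f z < f x := fun z hz =>
    (hfr z (hΩo.frontier_eq ▸ hz)).trans_lt hcx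
  obtain ⟨y, hy, hmax⟩ := hΩc.exists_isMaxOn_mem_subset hf (subset_closure hx) hlt
  exact ⟨y, hy, hmax.isLocalMax (mem_of_superset (hΩo.mem_nhds hy) subset_closure),
    hcx.trans_le (hmax (subset_closure hx))⟩

section HyperbolicFunctions

lemma cosh_div_sinh_strictAntiOn : StrictAntiOn (fun t : ℝ => cosh t / sinh t) (Ioi 0) := by
  intro s hs t ht hst
  have hsub : 0 < sinh (t - s) := sinh_pos_iff.2 (sub_pos.2 hst)
  rw [sinh_sub] at hsub
  refine (div_lt_div_iff₀ (sinh_pos_iff.2 ht) (sinh_pos_iff.2 hs)).2 ?_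
  linarith

lemma fderiv_cosh_comp_apply {E : Type*} [NormedAddCommGroup E] [NormedSpace ℝ E] {f : E → ℝ}
    {x : E} (hf : DifferentiableAt ℝ f x) (v : E) :
    fderiv ℝ (cosh ∘ f) x v = sinh (f x) * fderiv ℝ f x v :=
  congr($(hf.hasFDerivAt.cosh.fderiv) v)

/-- The inverse of `cosh` extended by `0` to the left of `1`, so that it is continuous and monotone
on all of `ℝ`. -/
noncomputable def truncArcosh (t : ℝ) : ℝ := arcosh (max 1 t)

lemma truncArcosh_of_one_le {t : ℝ} (ht : 1 ≤ t) : truncArcosh t = arcosh t := by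
  rw [truncArcosh, max_eq_right ht]

lemma continuous_truncArcosh : Continuous truncArcosh :=
  continuousOn_arcosh.comp_continuous (by fun_prop) fun t => le_max_left 1 t

lemma truncArcosh_monotone : Monotone truncArcosh := fun s t hst =>
  (arcosh_le_arcosh (by positivity) (by positivity)).2 (max_le_max_left 1 hst)

lemma truncArcosh_pos {t : ℝ} (ht : 1 < t) : 0 < truncArcosh t := by
  simpa only [truncArcosh_of_one_le ht.le] using arcosh_pos ht

lemma truncArcosh_lt_truncArcosh {s t : ℝ} (hs : 1 < s) (hst : s < t) :
    truncArcosh s < truncArcosh t := by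
  rw [truncArcosh_of_one_le hs.le, truncArcosh_of_one_le (hs.trans hst).le]
  exact (arcosh_lt_arcosh (by linarith) (by linarith)).2 hst

lemma contDiffAt_truncArcosh {n : WithTop ℕ∞} {t : ℝ} (ht : 1 < t) :
    ContDiffAt ℝ n truncArcosh t :=
  (contDiffAt_arcosh ht).congr_of_eventuallyEq <|
    (eventually_gt_nhds ht).mono fun _ hs => truncArcosh_of_one_le hs.le

lemma cosh_truncArcosh_comp_eventuallyEq {X : Type*} [TopologicalSpace X] {w : X → ℝ} {x : X}
    (hw : ContinuousAt w x) (hx : 1 < w x) : cosh ∘ (truncArcosh ∘ w) =ᶠ[𝓝 x] w := by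
  filter_upwards [hw.eventually (lt_mem_nhds hx)] with y hy
  simp only [Function.comp_apply, truncArcosh_of_one_le hy.le, cosh_arcosh hy.le]

end HyperbolicFunctions

section PlanarDerivatives

variable {f g : ℝ × ℝ → ℝ} {x : ℝ × ℝ}

lemma map_eq_smul_add_smul {M : Type*} [AddCommGroup M] [Module ℝ M] {T : Type*}
    [FunLike T (ℝ × ℝ) M] [LinearMapClass T ℝ (ℝ × ℝ) M] (L : T) (v : ℝ × ℝ) :
    L v = v.1 • L (1, 0) + v.2 • L (0, 1) := by
  rw [← map_smul, ← map_smul, ← map_add]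
  simp

lemma fderiv_eq_pd1_add_pd2 (v : ℝ × ℝ) : fderiv ℝ f x v = v.1 * pd1 f x + v.2 * pd2 f x :=
  map_eq_smul_add_smul (fderiv ℝ f x) v

lemma D2_eq_fderiv_fderiv (hf : ContDiffAt ℝ 2 f x) (a b : ℝ × ℝ) :
    D2 f a b x = fderiv ℝ (fderiv ℝ f) x a b := by
  have hpartial (d e : ℝ × ℝ) : fderiv ℝ (fderiv ℝ f) x d e =
      fderiv ℝ (fun y => fderiv ℝ f y e) x d :=
    congr($((hasFDerivAt_fderiv_apply hf e).fderiv) d).symm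
  rw [map_eq_smul_add_smul _ a, add_apply, smul_apply, smul_apply, map_eq_smul_add_smul _ b,
    map_eq_smul_add_smul (fderiv ℝ (fderiv ℝ f) x (0, 1)) b]
  simp only [hpartial, smul_eq_mul]
  unfold D2 pd1 pd2
  ring

lemma Nop_congr {μ : ℝ} (h : f =ᶠ[𝓝 x] g) : Nop μ f x = Nop μ g x := by
  have h1 : pd1 f =ᶠ[𝓝 x] pd1 g := h.fderiv.mono fun y hy => congr($hy (1, 0))
  have h2 : pd2 f =ᶠ[𝓝 x] pd2 g := h.fderiv.mono fun y hy => congr($hy (0, 1))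
  have h11 : pd1 (pd1 f) x = pd1 (pd1 g) x := congr($(h1.fderiv_eq) (1, 0))
  have h12 : pd1 (pd2 f) x = pd1 (pd2 g) x := congr($(h2.fderiv_eq) (1, 0))
  have h21 : pd2 (pd1 f) x = pd2 (pd1 g) x := congr($(h1.fderiv_eq) (0, 1))
  have h22 : pd2 (pd2 f) x = pd2 (pd2 g) x := congr($(h2.fderiv_eq) (0, 1))
  simp only [Nop, b2, D2, gradv, dotxi, h.eq_of_nhds, h1.eq_of_nhds, h2.eq_of_nhds,
    h11, h12, h21, h22]

lemma D2_cosh_comp (hf : ContDiffAt ℝ 2 f x) (a b : ℝ × ℝ) :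
    D2 (cosh ∘ f) a b x =
      cosh (f x) * (fderiv ℝ f x a * fderiv ℝ f x b) + sinh (f x) * D2 f a b x := by
  rw [D2_eq_fderiv_fderiv (contDiff_cosh.contDiffAt.comp x hf), D2_eq_fderiv_fderiv hf,
    fderiv_fderiv_comp_apply contDiff_cosh.contDiffAt hf, Real.deriv_cosh, Real.deriv_sinh]
  simp only [smul_eq_mul]
  ring

end PlanarDerivatives

section ConicalGeometry

variable {f : ℝ × ℝ → ℝ} {x : ℝ × ℝ}

/-- The factor `1 + |ξ|²`, which is the determinant of `I₂ + ξξᵀ`. -/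
noncomputable def conFactor (x : ℝ × ℝ) : ℝ := 1 + x.1 ^ 2 + x.2 ^ 2

/-- The vector `(I₂ + ξξᵀ)Df = Df + (Df·ξ)ξ`. -/
noncomputable def conGrad (f : ℝ × ℝ → ℝ) (x : ℝ × ℝ) : ℝ × ℝ := gradv f x + dotxi f x • x

/-- The squared length `|Df|² + (Df·ξ)²` of the gradient with respect to `I₂ + ξξᵀ`. -/
noncomputable def conGradSq (f : ℝ × ℝ → ℝ) (x : ℝ × ℝ) : ℝ :=
  pd1 f x ^ 2 + pd2 f x ^ 2 + dotxi f x ^ 2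

/-- The trace `Δf + D²f[ξ,ξ]` of the Hessian with respect to `I₂ + ξξᵀ`. -/
noncomputable def conLaplacian (f : ℝ × ℝ → ℝ) (x : ℝ × ℝ) : ℝ :=
  pd1 (pd1 f) x + pd2 (pd2 f) x + D2 f x x x

/-- The gradient turned by a right angle. -/
noncomputable def rotGrad (f : ℝ × ℝ → ℝ) (x : ℝ × ℝ) : ℝ × ℝ := (-pd2 f x, pd1 f x)

lemma conFactor_pos (x : ℝ × ℝ) : 0 < conFactor x := by unfold conFactor; positivity

lemma conGradSq_nonneg (f : ℝ × ℝ → ℝ) (x : ℝ × ℝ) : 0 ≤ conGradSq f x := by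
  unfold conGradSq; positivity

lemma conLaplacian_eq_D2_add_D2_add_D2 :
    conLaplacian f x = D2 f (1, 0) (1, 0) x + D2 f (0, 1) (0, 1) x + D2 f x x x := by
  simp [conLaplacian, D2]

lemma fderiv_apply_conGrad : fderiv ℝ f x (conGrad f x) = conGradSq f x := by
  simp only [fderiv_eq_pd1_add_pd2, conGrad, conGradSq, gradv, dotxi, Prod.fst_add, Prod.snd_add,
    Prod.smul_fst, Prod.smul_snd, smul_eq_mul]
  ring

-- In dimension two the Cauchy-Schwarz defect `|v|² I - vvᵀ` is the square of the rotated `v`; this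
-- is that fact for the metric `I₂ + ξξᵀ`, and the source of the ellipticity of `𝒩_μ`.
lemma conGradSq_mul_conLaplacian :
    conGradSq f x * conLaplacian f x =
      D2 f (conGrad f x) (conGrad f x) x
        + conFactor x * D2 f (rotGrad f x) (rotGrad f x) x := by
  simp only [conGradSq, conLaplacian, conFactor, conGrad, rotGrad, D2, gradv, dotxi, Prod.fst_add,
    Prod.snd_add, Prod.smul_fst, Prod.smul_snd, smul_eq_mul]
  ring

end ConicalGeometry

section HyperbolicSubstitution

variable {μ : ℝ} {f U : ℝ × ℝ → ℝ} {x : ℝ × ℝ}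

lemma D2_smul_smul (c d : ℝ) (a b : ℝ × ℝ) :
    D2 f (c • a) (d • b) x = c * d * D2 f a b x := by
  simp only [D2, Prod.smul_fst, Prod.smul_snd, smul_eq_mul]
  ring

lemma dotxi_cosh_comp (hU : DifferentiableAt ℝ U x) :
    dotxi (cosh ∘ U) x = sinh (U x) * dotxi U x := by
  simp only [dotxi, pd1, pd2, fderiv_cosh_comp_apply hU]
  ring

lemma conGrad_cosh_comp (hU : DifferentiableAt ℝ U x) :
    conGrad (cosh ∘ U) x = sinh (U x) • conGrad U x := by
  simp only [conGrad, gradv, pd1, pd2, fderiv_cosh_comp_apply hU, dotxi_cosh_comp hU]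
  ext <;> simp <;> ring

lemma b2_cosh_comp (hU : DifferentiableAt ℝ U x) :
    b2 (cosh ∘ U) x = sinh (U x) ^ 2 * (1 + conFactor x * conGradSq U x) := by
  simp only [b2, dotxi_cosh_comp hU, pd1, pd2, fderiv_cosh_comp_apply hU, Function.comp_apply,
    cosh_sq, conFactor, conGradSq]
  ring

lemma conLaplacian_cosh_comp (hU : ContDiffAt ℝ 2 U x) :
    conLaplacian (cosh ∘ U) x =
      cosh (U x) * conGradSq U x + sinh (U x) * conLaplacian U x := by
  simp only [conLaplacian_eq_D2_add_D2_add_D2, D2_cosh_comp hU, fderiv_eq_pd1_add_pd2, conGradSq,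
    dotxi]
  ring

/-- The second order part of `reducedOp μ`, the contraction of `D²U` with a matrix that is
visibly a positive combination of squares when `μ ≤ 1`. -/
noncomputable def reducedPrincipal (μ : ℝ) (U : ℝ × ℝ → ℝ) (x : ℝ × ℝ) : ℝ :=
  conLaplacian U x + (1 - μ) * conFactor x * D2 U (conGrad U x) (conGrad U x) x
    + conFactor x ^ 2 * D2 U (rotGrad U x) (rotGrad U x) x

/-- The coefficient of `coth U` in `reducedOp μ`. -/
noncomputable def cothCoeff (μ : ℝ) (U : ℝ × ℝ → ℝ) (x : ℝ × ℝ) : ℝ :=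
  2 / conFactor x + (3 - μ) * conGradSq U x + (1 - μ) * conFactor x * conGradSq U x ^ 2

/-- The operator `U ↦ 𝒩_μ (cosh U) / sinh³ U`, meant for `U > 0`. -/
noncomputable def reducedOp (μ : ℝ) (U : ℝ × ℝ → ℝ) (x : ℝ × ℝ) : ℝ :=
  reducedPrincipal μ U x + 2 * (1 + (1 - μ) * conFactor x * conGradSq U x) * dotxi U x
    + cosh (U x) / sinh (U x) * cothCoeff μ U x

lemma reducedPrincipal_eq :
    reducedPrincipal μ U x = (1 + conFactor x * conGradSq U x) * conLaplacian U x
      - μ * conFactor x * D2 U (conGrad U x) (conGrad U x) x := by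
  unfold reducedPrincipal
  linear_combination -conFactor x * conGradSq_mul_conLaplacian (f := U) (x := x)

lemma Nop_eq :
    Nop μ f x = b2 f x * conLaplacian f x
      - μ * conFactor x * D2 f (conGrad f x) (conGrad f x) x
      + 2 * ((1 - μ) * b2 f x + μ * (f x ^ 2 - 1)) * dotxi f x
      + ((2 - μ) * b2 f x + μ * (f x ^ 2 - 1)) * f x / conFactor x :=
  rfl

lemma Nop_cosh_comp (hU : ContDiffAt ℝ 2 U x) (hpos : 0 < U x) :
    Nop μ (cosh ∘ U) x = sinh (U x) ^ 3 * reducedOp μ U x := by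
  have hd : DifferentiableAt ℝ U x := hU.differentiableAt two_ne_zero
  have hs : sinh (U x) ≠ 0 := (sinh_pos_iff.2 hpos).ne'
  have hm : conFactor x ≠ 0 := (conFactor_pos x).ne'
  have hsq : cosh (U x) ^ 2 - 1 = sinh (U x) ^ 2 := by rw [cosh_sq, add_sub_cancel_right]
  rw [Nop_eq, b2_cosh_comp hd, conLaplacian_cosh_comp hU, dotxi_cosh_comp hd, conGrad_cosh_comp hd,
    D2_smul_smul, D2_cosh_comp hU, fderiv_apply_conGrad, Function.comp_apply, reducedOp,
    reducedPrincipal_eq, cothCoeff, hsq]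
  field_simp
  ring

lemma cothCoeff_pos (hμ : μ ≤ 1) : 0 < cothCoeff μ U x := by
  have hconst : 0 < 2 / conFactor x := div_pos two_pos (conFactor_pos x)
  have hlin : 0 ≤ (3 - μ) * conGradSq U x := mul_nonneg (by linarith) (conGradSq_nonneg U x)
  have hquad : 0 ≤ (1 - μ) * conFactor x * conGradSq U x ^ 2 :=
    mul_nonneg (mul_nonneg (sub_nonneg.2 hμ) (conFactor_pos x).le) (sq_nonneg _)
  unfold cothCoeff
  linarith

end HyperbolicSubstitution

section Comparison

variable {μ : ℝ} {U V wm wp : ℝ × ℝ → ℝ} {x : ℝ × ℝ}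

lemma gradv_eq_of_fderiv_eq (h : fderiv ℝ U x = fderiv ℝ V x) : gradv U x = gradv V x := by
  simp only [gradv, pd1, pd2, h]

lemma dotxi_eq_of_fderiv_eq (h : fderiv ℝ U x = fderiv ℝ V x) : dotxi U x = dotxi V x := by
  simp only [dotxi, pd1, pd2, h]

lemma conGradSq_eq_of_fderiv_eq (h : fderiv ℝ U x = fderiv ℝ V x) :
    conGradSq U x = conGradSq V x := by
  simp only [conGradSq, dotxi, pd1, pd2, h]

lemma reducedPrincipal_le_of_isLocalMax_sub (hμ : μ ≤ 1) (hU : ContDiffAt ℝ 2 U x)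
    (hV : ContDiffAt ℝ 2 V x) (hmax : IsLocalMax (U - V) x) :
    reducedPrincipal μ U x ≤ reducedPrincipal μ V x := by
  have hfd : fderiv ℝ U x = fderiv ℝ V x := fderiv_eq_of_isLocalMax_sub
    (hU.differentiableAt two_ne_zero) (hV.differentiableAt two_ne_zero) hmax
  have hcon : conGrad U x = conGrad V x := by
    rw [conGrad, conGrad, gradv_eq_of_fderiv_eq hfd, dotxi_eq_of_fderiv_eq hfd]
  have hrot : rotGrad U x = rotGrad V x := by simp only [rotGrad, pd1, pd2, hfd]
  have hD2 (v : ℝ × ℝ) : D2 U v v x ≤ D2 V v v x := by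
    simpa only [D2_eq_fderiv_fderiv hU, D2_eq_fderiv_fderiv hV] using
      fderiv_fderiv_apply_self_le_of_isLocalMax_sub hU hV hmax v
  have hcoeff : 0 ≤ (1 - μ) * conFactor x := mul_nonneg (by linarith) (conFactor_pos x).le
  simp only [reducedPrincipal, conLaplacian_eq_D2_add_D2_add_D2, hcon, hrot]
  gcongr <;> apply hD2

lemma reducedOp_lt_of_isLocalMax_sub (hμ : μ ≤ 1) (hU : ContDiffAt ℝ 2 U x)
    (hV : ContDiffAt ℝ 2 V x) (hpos : 0 < V x) (hlt : V x < U x)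
    (hmax : IsLocalMax (U - V) x) : reducedOp μ U x < reducedOp μ V x := by
  have hfd : fderiv ℝ U x = fderiv ℝ V x := fderiv_eq_of_isLocalMax_sub
    (hU.differentiableAt two_ne_zero) (hV.differentiableAt two_ne_zero) hmax
  have hcoth : cosh (U x) / sinh (U x) < cosh (V x) / sinh (V x) :=
    cosh_div_sinh_strictAntiOn hpos (hpos.trans hlt) hlt
  have hcoeff : cothCoeff μ U x = cothCoeff μ V x := by
    rw [cothCoeff, cothCoeff, conGradSq_eq_of_fderiv_eq hfd]
  rw [reducedOp, reducedOp, conGradSq_eq_of_fderiv_eq hfd, dotxi_eq_of_fderiv_eq hfd, hcoeff]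
  exact add_lt_add_of_le_of_lt
    (add_le_add_left (reducedPrincipal_le_of_isLocalMax_sub hμ hU hV hmax) _)
    (mul_lt_mul_of_pos_right hcoth (cothCoeff_pos hμ))

lemma Nop_eq_reducedOp_truncArcosh {w : ℝ × ℝ → ℝ} (hw : ContDiffAt ℝ 2 w x) (h1 : 1 < w x) :
    Nop μ w x = sinh (truncArcosh (w x)) ^ 3 * reducedOp μ (truncArcosh ∘ w) x := by
  rw [← Nop_congr (cosh_truncArcosh_comp_eventuallyEq hw.continuousAt h1)]
  exact Nop_cosh_comp ((contDiffAt_truncArcosh h1).comp x hw) (truncArcosh_pos h1)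

lemma not_isLocalMax_truncArcosh_sub (hμ : μ ≤ 1) (hm2 : ContDiffAt ℝ 2 wm x)
    (hp2 : ContDiffAt ℝ 2 wp x) (hp1 : 1 < wp x) (hlt : wp x < wm x) (hNm : 0 ≤ Nop μ wm x)
    (hNp : Nop μ wp x ≤ 0) : ¬ IsLocalMax (truncArcosh ∘ wm - truncArcosh ∘ wp) x := by
  intro hmax
  have hm1 : 1 < wm x := hp1.trans hlt
  have hsinh {t : ℝ} (ht : 1 < t) : 0 < sinh (truncArcosh t) ^ 3 :=
    pow_pos (sinh_pos_iff.2 (truncArcosh_pos ht)) 3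
  rw [Nop_eq_reducedOp_truncArcosh hm2 hm1] at hNm
  rw [Nop_eq_reducedOp_truncArcosh hp2 hp1] at hNp
  have hRlt := reducedOp_lt_of_isLocalMax_sub hμ ((contDiffAt_truncArcosh hm1).comp x hm2)
    ((contDiffAt_truncArcosh hp1).comp x hp2) (truncArcosh_pos hp1)
    (truncArcosh_lt_truncArcosh hp1 hlt) hmax
  exact hRlt.not_ge <| (nonpos_of_mul_nonpos_right hNp (hsinh hp1)).trans
    (nonneg_of_mul_nonneg_right hNm (hsinh hm1))

end Comparison

theorem comparison_principle_N1_general {μ : ℝ} (hμ : μ ≤ 1)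
    {ΩD : Set (ℝ × ℝ)} (hΩo : IsOpen ΩD) (hΩb : Bornology.IsBounded ΩD)
    {wm wp : ℝ × ℝ → ℝ}
    (hmc : ContinuousOn wm (closure ΩD)) (hpc : ContinuousOn wp (closure ΩD))
    (hm2 : ContDiffOn ℝ 2 wm ΩD) (hp2 : ContDiffOn ℝ 2 wp ΩD)
    (hp1 : ∀ x ∈ ΩD, 1 < wp x)
    (hNm : ∀ x ∈ ΩD, 0 ≤ Nop μ wm x) (hNp : ∀ x ∈ ΩD, Nop μ wp x ≤ 0)
    (hbd : ∀ x ∈ frontier ΩD, wm x ≤ wp x) :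
    ∀ x ∈ ΩD, wm x ≤ wp x := by
  intro x hx
  by_contra! hlt
  have hcont : ContinuousOn (truncArcosh ∘ wm - truncArcosh ∘ wp) (closure ΩD) :=
    (continuous_truncArcosh.comp_continuousOn hmc).sub
      (continuous_truncArcosh.comp_continuousOn hpc)
  obtain ⟨y, hy, hmax, hpos⟩ := exists_isLocalMax_gt_of_frontier_le hΩo
    hΩb.isCompact_closure hcont
    (fun z hz => sub_nonpos.2 (truncArcosh_monotone (hbd z hz))) hx
    (sub_pos.2 (truncArcosh_lt_truncArcosh (hp1 x hx) hlt))
  have hlty : wp y < wm y := truncArcosh_monotone.reflect_lt (sub_pos.1 hpos)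
  have hnhds : ΩD ∈ 𝓝 y := hΩo.mem_nhds hy
  exact not_isLocalMax_truncArcosh_sub hμ (hm2.contDiffAt hnhds) (hp2.contDiffAt hnhds) (hp1 y hy)
    hlty (hNm y hy) (hNp y hy) hmax

/-- Comparison principle (Lemma 3.1) for the operator `𝒩₁`: if `w₋, w₊` are
continuous on the closure and `C²` inside an open bounded domain, both `> 1`,
`𝒩₁ w₋ ≥ 0 ≥ 𝒩₁ w₊` in the domain, `w₋ ≤ w₊` on the boundary, and `𝒩₁` is locally
uniformly elliptic with respect to `w₊` or `w₋`, then `w₋ ≤ w₊` in the domain. -/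
theorem comparison_principle_N1
    (ΩD : Set (ℝ × ℝ)) (hΩo : IsOpen ΩD) (hΩb : Bornology.IsBounded ΩD)
    (wm wp : ℝ × ℝ → ℝ)
    (hmc : ContinuousOn wm (closure ΩD)) (hpc : ContinuousOn wp (closure ΩD))
    (hm2 : ContDiffOn ℝ 2 wm ΩD) (hp2 : ContDiffOn ℝ 2 wp ΩD)
    (hm1 : ∀ x ∈ ΩD, 1 < wm x) (hp1 : ∀ x ∈ ΩD, 1 < wp x)
    (hNm : ∀ x ∈ ΩD, 0 ≤ Nop 1 wm x) (hNp : ∀ x ∈ ΩD, Nop 1 wp x ≤ 0)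
    (hbd : ∀ x ∈ frontier ΩD, wm x ≤ wp x)
    (hell : LocUnifElliptic 1 wp ΩD ∨ LocUnifElliptic 1 wm ΩD) :
    ∀ x ∈ ΩD, wm x ≤ wp x :=
  comparison_principle_N1_general le_rfl hΩo hΩb hmc hpc hm2 hp2 hp1 hNm hNp hbd
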